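/- arXiv:1601.05595 — 2 statements merged into one kernel-verified Lean document; each statement's English description precedes it below -/
import Mathlib

section
/- (Cadambe–Mazumdar bound) Let C be a q-ary (n,k,r) LRC with all symbol locality, where k ≥ 1 and r ≥ 1, and let d be its minimum distance. Then for every integer t with 1 ≤ t ≤ ⌈k/r⌉ − 1, k ≤ tr + k_opt^{(q)}(n − t(r+1), d), where k_opt^{(q)}(n', d') denotes the maximum possible dimension of a q-ary linear code of length n' with minimum distance at least d'. -/
/-- Coordinate `i` of the linear code `C` has locality `r`. -/
def HasLocality {F ι : Type*} [Field F] [Fintype ι]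
    (C : Submodule F (ι → F)) (i : ι) (r : ℕ) : Prop :=
  ∃ R : Finset ι, i ∉ R ∧ R.card ≤ r ∧
    ∀ c ∈ C, ∀ c' ∈ C, (∀ j ∈ R, c j = c' j) → c i = c' i

/-- The minimum distance of a linear code: the least Hamming weight of a nonzero codeword. -/
noncomputable def minDist {F ι : Type*} [Field F] [Fintype ι] [DecidableEq F]
    (C : Submodule F (ι → F)) : ℕ :=
  sInf {w | ∃ c ∈ C, c ≠ 0 ∧ hammingNorm c = w}

/-- `kOpt F n d` is the largest possible dimension of a linear code over `F` of length `n`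
whose minimum distance is at least `d` (every nonzero codeword has weight at least `d`). -/
noncomputable def kOpt (F : Type*) [Field F] [Fintype F] [DecidableEq F] (n d : ℕ) : ℕ :=
  sSup {k | ∃ C : Submodule F (Fin n → F), Module.finrank F C = k ∧
    ∀ c ∈ C, c ≠ 0 → d ≤ hammingNorm c}

/-- The subcode of `C` vanishing on `I`. -/
def zeroOn {F : Type*} [Field F] {n : ℕ} (C : Submodule F (Fin n → F)) (I : Finset (Fin n)) :
    Submodule F (Fin n → F) where
  carrier := {c | c ∈ C ∧ ∀ i ∈ I, c i = 0}
  add_mem' := by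
    rintro a b ⟨ha, ha'⟩ ⟨hb, hb'⟩
    exact ⟨C.add_mem ha hb, fun i hi => by simp [ha' i hi, hb' i hi]⟩
  zero_mem' := ⟨C.zero_mem, fun _ _ => rfl⟩
  smul_mem' := by
    rintro a b ⟨hb, hb'⟩
    exact ⟨C.smul_mem a hb, fun i hi => by simp [hb' i hi]⟩

theorem mem_zeroOn {F : Type*} [Field F] {n : ℕ} {C : Submodule F (Fin n → F)}
    {I : Finset (Fin n)} {c : Fin n → F} :
    c ∈ zeroOn C I ↔ c ∈ C ∧ ∀ i ∈ I, c i = 0 := Iff.rfl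

theorem zeroOn_insert {F : Type*} [Field F] {n : ℕ} (C : Submodule F (Fin n → F))
    (I : Finset (Fin n)) (j : Fin n) :
    Module.finrank F (zeroOn C I) ≤ Module.finrank F (zeroOn C (insert j I)) + 1 := by
  let f : zeroOn C I →ₗ[F] F := (LinearMap.proj j).comp (zeroOn C I).subtype
  have h1 := f.finrank_range_add_finrank_ker
  have h2 : Module.finrank F (LinearMap.range f) ≤ 1 := by
    simpa using Submodule.finrank_le (LinearMap.range f)
  have h3 : Module.finrank F (LinearMap.ker f)
      ≤ Module.finrank F (zeroOn C (insert j I)) := by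
    have h4 : (LinearMap.ker f).map (zeroOn C I).subtype ≤ zeroOn C (insert j I) := by
      rintro _ ⟨⟨c, hc⟩, hc', rfl⟩
      refine ⟨hc.1, fun i hi => ?_⟩
      rcases Finset.mem_insert.1 hi with rfl | hi
      · exact hc'
      · exact hc.2 i hi
    have h5 := Submodule.finrank_mono h4
    rwa [Submodule.finrank_map_subtype_eq] at h5
  omega

theorem zeroOn_union {F : Type*} [Field F] {n : ℕ} (C : Submodule F (Fin n → F))
    (I R : Finset (Fin n)) :
    Module.finrank F (zeroOn C I) + I.card
      ≤ Module.finrank F (zeroOn C (R ∪ I)) + (R ∪ I).card := by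
  induction R using Finset.induction_on with
  | empty => rw [Finset.empty_union]
  | insert j R _ ih =>
    rw [Finset.insert_union]
    by_cases h : j ∈ R ∪ I
    · rwa [Finset.insert_eq_of_mem h]
    · have := zeroOn_insert C (R ∪ I) j
      rw [Finset.card_insert_of_notMem h]
      omega

theorem exists_set {F : Type*} [Field F] {n r t : ℕ}
    (C : Submodule F (Fin n → F)) (hloc : ∀ i : Fin n, HasLocality C i r)
    (ht : t * r < Module.finrank F C) : ∀ s ≤ t, ∃ I : Finset (Fin n),
      I.card ≤ s * (r + 1) ∧
      Module.finrank F C + s ≤ Module.finrank F (zeroOn C I) + I.card := by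
  intro s
  induction s with
  | zero =>
    intro _
    have h : zeroOn C ∅ = C := by
      ext c
      simp [mem_zeroOn]
    exact ⟨∅, by simp, by rw [h]; simp⟩
  | succ s ih =>
    intro hs
    obtain ⟨I, hI, hZ⟩ := ih (by omega)
    have hsr : s * r ≤ t * r := Nat.mul_le_mul_right r (by omega)
    have hex : ∃ i, i ∉ I := by
      by_contra! hcon
      have hbot : zeroOn C I = ⊥ := by
        rw [eq_bot_iff]
        intro c hc
        exact (Submodule.mem_bot F).2 (funext fun i => hc.2 i (hcon i))
      rw [hbot, finrank_bot] at hZ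
      have : s * (r + 1) = s * r + s := by ring
      omega
    obtain ⟨i, hi⟩ := hex
    obtain ⟨R, hiR, hRr, hR⟩ := hloc i
    refine ⟨insert i (R ∪ I), ?_, ?_⟩
    · have h1 := Finset.card_insert_le i (R ∪ I)
      have h2 := Finset.card_union_le R I
      have : (s + 1) * (r + 1) = s * (r + 1) + (r + 1) := by ring
      omega
    · have h : zeroOn C (insert i (R ∪ I)) = zeroOn C (R ∪ I) := by
        ext c
        constructor
        · rintro ⟨h1, h2⟩
          exact ⟨h1, fun j hj => h2 j (Finset.mem_insert_of_mem hj)⟩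
        · rintro ⟨h1, h2⟩
          refine ⟨h1, fun j hj => ?_⟩
          rcases Finset.mem_insert.1 hj with rfl | hj
          · exact hR c h1 0 C.zero_mem fun j hj => h2 j (Finset.mem_union_left _ hj)
          · exact h2 j hj
      have h1 := zeroOn_union C I R
      rw [h, Finset.card_insert_of_notMem (by simp [hi, hiR])]
      omega

theorem finrank_le_kOpt {F : Type*} [Field F] [Fintype F] [DecidableEq F] {n m : ℕ}
    (C : Submodule F (Fin n → F)) (J : Finset (Fin n)) (hm : Jᶜ.card = m) :
    Module.finrank F (zeroOn C J) ≤ kOpt F m (minDist C) := by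
  let e := Jᶜ.orderEmbOfFin hm
  have he : ∀ i, i ∉ J → ∃ x, e x = i := by
    intro i hi
    have : i ∈ Set.range e := by
      rw [Finset.range_orderEmbOfFin]
      simpa using hi
    exact this
  let f : (Fin n → F) →ₗ[F] (Fin m → F) := LinearMap.funLeft F F e
  have hf : ∀ c x, f c x = c (e x) := fun _ _ => rfl
  apply le_csSup
  · refine ⟨m, ?_⟩
    rintro _ ⟨D, rfl, _⟩
    simpa using Submodule.finrank_le D
  refine ⟨(zeroOn C J).map f, ?_, ?_⟩
  · have hinj : Function.Injective (f.comp (zeroOn C J).subtype) := by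
      rw [← LinearMap.ker_eq_bot, LinearMap.ker_eq_bot']
      rintro ⟨c, hc⟩ h
      ext i
      by_cases hi : i ∈ J
      · exact hc.2 i hi
      · obtain ⟨x, rfl⟩ := he i hi
        exact congrFun h x
    have h1 := LinearMap.finrank_range_of_inj hinj
    rwa [LinearMap.range_comp, Submodule.range_subtype] at h1
  · rintro _ ⟨c, hc, rfl⟩ hne
    have hc0 : c ≠ 0 := by
      rintro rfl
      exact hne (map_zero f)
    have h1 : minDist C ≤ hammingNorm c := Nat.sInf_le ⟨c, hc.1, hc0, rfl⟩
    refine h1.trans ?_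
    unfold hammingNorm
    rw [← Finset.card_map e.toEmbedding]
    apply Finset.card_le_card
    intro i hi
    have hi' : c i ≠ 0 := by simpa using hi
    obtain ⟨x, rfl⟩ := he i fun h => hi' (hc.2 i h)
    exact Finset.mem_map.2 ⟨x, by simpa [hf] using hi', rfl⟩

/-- Cadambe–Mazumdar bound: for a `q`-ary `(n,k,r)` LRC with all symbol locality and minimum
distance `d`, `k ≤ tr + k_opt^{(q)}(n - t(r+1), d)` for every `t` with `1 ≤ t ≤ ⌈k/r⌉ - 1`. -/
theorem stmt_6 {F : Type*} [Field F] [Fintype F] [DecidableEq F]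
    {n k r : ℕ} (hk : 1 ≤ k) (hr : 1 ≤ r)
    (C : Submodule F (Fin n → F)) (hCk : Module.finrank F C = k)
    (hloc : ∀ i : Fin n, HasLocality C i r) :
    ∀ t : ℕ, 1 ≤ t → (t : ℤ) ≤ ⌈(k : ℚ) / r⌉ - 1 →
      k ≤ t * r + kOpt F (n - t * (r + 1)) (minDist C) := by
  intro t _ ht
  have htr : t * r < k := by
    have h1 : (t : ℤ) < ⌈(k : ℚ) / r⌉ := by omega
    have h2 := Int.lt_ceil.1 h1
    have h3 : (0 : ℚ) < r := by exact_mod_cast hr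
    rw [lt_div_iff₀ h3] at h2
    exact_mod_cast h2
  obtain ⟨I, hI, hZ⟩ := exists_set C hloc (t := t) (by omega) t le_rfl
  have hIn : I.card ≤ n := by simpa using Finset.card_le_univ I
  obtain ⟨J, hIJ, hJ⟩ := Finset.exists_superset_card_eq (s := I)
    (n := min n (t * (r + 1))) (le_min hIn hI) (by simp)
  have h1 := zeroOn_union C I J
  rw [Finset.union_eq_left.2 hIJ] at h1
  have h2 := finrank_le_kOpt (m := n - t * (r + 1)) C J (by
    rw [Finset.card_compl, Fintype.card_fin]; omega)
  have h3 : t * (r + 1) = t * r + t := by ring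
  omega
end

section
/- (Construction 3) Let F_q be a finite field, r ≥ 4, l ≥ 1, and n = l(r+1). Let α_{i,j} ∈ F_q for i ∈ {1,…,l}, j ∈ {1,…,r+1}, with α_{i,j_1} ≠ α_{i,j_2} whenever j_1 ≠ j_2, and with α_{i_1,j_1} + α_{i_1,j_2} ≠ α_{i_2,h_1} + α_{i_2,h_2} whenever i_1 ≠ i_2, j_1 ≠ j_2 and h_1 ≠ h_2. Let H be the (l+3)×n matrix over F_q whose columns are indexed by pairs (i,j), such that for i' ∈ {1,…,l} the entry of row i' in column (i,j) equals 1 if i = i' and 0 otherwise, and the entries of rows l+1, l+2, l+3 in column (i,j) equal α_{i,j}, α_{i,j}^2, α_{i,j}^3 respectively. Then the linear code C = {x ∈ F_q^n : Hx = 0} has dimension n − l − 3, every coordinate of C has locality r, and the minimum distance of C equals 5, which equals the Singleton-like bound n − k − ⌈k/r⌉ + 2 for k = n − l − 3. -/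
theorem aux_ker {F : Type*} [Field F] {l r : ℕ}
    (α : Fin l → Fin (r + 1) → F)
    (H : Matrix (Fin l ⊕ Fin 3) (Fin l × Fin (r + 1)) F)
    (hH1 : ∀ (i' : Fin l) (p : Fin l × Fin (r + 1)),
      H (Sum.inl i') p = if p.1 = i' then 1 else 0)
    (hH2 : ∀ p : Fin l × Fin (r + 1), H (Sum.inr 0) p = α p.1 p.2)
    (hH3 : ∀ p : Fin l × Fin (r + 1), H (Sum.inr 1) p = α p.1 p.2 ^ 2)
    (hH4 : ∀ p : Fin l × Fin (r + 1), H (Sum.inr 2) p = α p.1 p.2 ^ 3)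
    (c : Fin l × Fin (r + 1) → F) :
    c ∈ LinearMap.ker H.mulVecLin ↔
      (∀ i, ∑ j, c (i, j) = 0) ∧ (∑ p, α p.1 p.2 * c p = 0) ∧
      (∑ p, α p.1 p.2 ^ 2 * c p = 0) ∧ (∑ p, α p.1 p.2 ^ 3 * c p = 0) := by
  have key : ∀ i, ∑ p, H (Sum.inl i) p * c p = ∑ j, c (i, j) := by
    intro i
    rw [Fintype.sum_prod_type, Finset.sum_eq_single i]
    · simp [hH1]
    · intro b _ hb
      simp [hH1, hb]
    · simp
  rw [LinearMap.mem_ker, Matrix.mulVecLin_apply, funext_iff, Sum.forall]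
  simp only [Matrix.mulVec, dotProduct, Fin.forall_fin_succ, Pi.zero_apply, key]
  simp [hH2, hH3, hH4]

/-- A codeword annihilates polynomials of degree at most three. -/
theorem aux_poly {F : Type*} [Field F] {l r : ℕ}
    (α : Fin l → Fin (r + 1) → F) (c : Fin l × Fin (r + 1) → F)
    (h0 : ∀ i, ∑ j, c (i, j) = 0) (h1 : ∑ p, α p.1 p.2 * c p = 0)
    (h2 : ∑ p, α p.1 p.2 ^ 2 * c p = 0) (h3 : ∑ p, α p.1 p.2 ^ 3 * c p = 0)
    (f : Polynomial F) (hf : f.natDegree < 4) :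
    ∑ p, f.eval (α p.1 p.2) * c p = 0 := by
  have h0' : ∑ p, c p = 0 := by
    rw [Fintype.sum_prod_type]
    exact Finset.sum_eq_zero fun i _ => h0 i
  have e : ∀ p : Fin l × Fin (r + 1), f.eval (α p.1 p.2) * c p =
      f.coeff 0 * c p + f.coeff 1 * (α p.1 p.2 * c p) + f.coeff 2 * (α p.1 p.2 ^ 2 * c p)
        + f.coeff 3 * (α p.1 p.2 ^ 3 * c p) := by
    intro p
    rw [Polynomial.eval_eq_sum_range' hf]
    simp only [Finset.sum_range_succ, Finset.sum_range_zero]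
    ring
  simp only [e, Finset.sum_add_distrib, ← Finset.mul_sum, h0', h1, h2, h3]
  simp

theorem aux_partner {F : Type*} [Field F] {l r : ℕ}
    (c : Fin l × Fin (r + 1) → F) (h0 : ∀ i, ∑ j, c (i, j) = 0)
    (i : Fin l) (j : Fin (r + 1)) (h : c (i, j) ≠ 0) : ∃ j', j' ≠ j ∧ c (i, j') ≠ 0 := by
  by_contra! hc
  apply h
  rw [← h0 i, Finset.sum_eq_single j]
  · intro b _ hb
    exact hc b hb
  · simp

theorem aux_lower {F : Type*} [Field F] [DecidableEq F] {l r : ℕ}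
    (α : Fin l → Fin (r + 1) → F) (hα : ∀ i : Fin l, Function.Injective (α i))
    (hsum : ∀ (i₁ i₂ : Fin l) (j₁ j₂ h₁ h₂ : Fin (r + 1)), i₁ ≠ i₂ → j₁ ≠ j₂ → h₁ ≠ h₂ →
      α i₁ j₁ + α i₁ j₂ ≠ α i₂ h₁ + α i₂ h₂)
    (c : Fin l × Fin (r + 1) → F)
    (h0 : ∀ i, ∑ j, c (i, j) = 0) (h1 : ∑ p, α p.1 p.2 * c p = 0)
    (h2 : ∑ p, α p.1 p.2 ^ 2 * c p = 0) (h3 : ∑ p, α p.1 p.2 ^ 3 * c p = 0)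
    (hc : c ≠ 0) : 5 ≤ hammingNorm c := by
  by_contra! hw
  obtain ⟨⟨i, j⟩, hp⟩ := Function.ne_iff.mp hc
  simp only [Pi.zero_apply] at hp
  set S : Finset (Fin l × Fin (r + 1)) := Finset.univ.filter fun p => c p ≠ 0 with hS
  have hcard : S.card < 5 := hw
  have hmem : ∀ p, p ∈ S ↔ c p ≠ 0 := by simp [hS]
  by_cases hall : ∀ q ∈ S, q.1 = i
  · let f : Polynomial F := ∏ q ∈ S.erase (i, j), (Polynomial.X - Polynomial.C (α q.1 q.2))
    have hf : f.natDegree < 4 := by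
      have := Polynomial.natDegree_finsetProd_X_sub_C_eq_card (S.erase (i, j))
        (fun q : Fin l × Fin (r + 1) => α q.1 q.2)
      have h5 := Finset.card_erase_of_mem ((hmem (i, j)).2 hp)
      have : f.natDegree = (S.erase (i, j)).card := this
      omega
    have hz := aux_poly α c h0 h1 h2 h3 f hf
    rw [Finset.sum_eq_single (i, j)] at hz
    · rcases mul_eq_zero.mp hz with hz | hz
      · simp only [f, Polynomial.eval_prod, Finset.prod_eq_zero_iff] at hz
        obtain ⟨⟨a, b⟩, hq, hz⟩ := hz
        rw [Finset.mem_erase] at hq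
        have ha := hall _ hq.2
        simp only at ha
        subst ha
        simp only [Polynomial.eval_sub, Polynomial.eval_X, Polynomial.eval_C] at hz
        have := hα a (sub_eq_zero.mp hz)
        exact hq.1 (by rw [this])
      · exact hp hz
    · intro q _ hq
      by_cases hcq : c q = 0
      · simp [hcq]
      · have : q ∈ S.erase (i, j) := Finset.mem_erase.2 ⟨hq, (hmem q).2 hcq⟩
        have : f.eval (α q.1 q.2) = 0 := by
          simp only [f, Polynomial.eval_prod]
          exact Finset.prod_eq_zero this (by simp)
        simp [this]
    · simp
  · push Not at hall
    obtain ⟨⟨i', k⟩, hq, hii⟩ := hall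
    simp only at hii
    rw [hmem] at hq
    obtain ⟨j', hj', hp'⟩ := aux_partner c h0 i j hp
    obtain ⟨k', hk', hq'⟩ := aux_partner c h0 i' k hq
    let T : Finset (Fin l × Fin (r + 1)) := {(i, j), (i, j'), (i', k), (i', k')}
    have hTc : T.card = 4 := by
      simp only [T]
      rw [Finset.card_insert_of_notMem, Finset.card_insert_of_notMem,
        Finset.card_insert_of_notMem, Finset.card_singleton]
      all_goals simp [hii, hii.symm, hj', hj'.symm, hk', hk'.symm]
    have hTS : T ⊆ S := by
      intro p hpT
      simp only [T, Finset.mem_insert, Finset.mem_singleton] at hpT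
      rw [hmem]
      rcases hpT with rfl | rfl | rfl | rfl <;> assumption
    have hST : T = S := Finset.eq_of_subset_of_card_le hTS (by omega)
    have hzero : ∀ p, p ∉ T → c p = 0 := by
      intro p hpT
      by_contra hne
      exact hpT (hST ▸ (hmem p).2 hne)
    have hsumT : ∀ g : Fin l × Fin (r + 1) → F, ∑ p, g p * c p =
        g (i, j) * c (i, j) + (g (i, j') * c (i, j') + (g (i', k) * c (i', k)
          + g (i', k') * c (i', k'))) := by
      intro g
      rw [← Finset.sum_subset (Finset.subset_univ T)
        (fun p _ hpT => by rw [hzero p hpT, mul_zero])]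
      simp only [T]
      rw [Finset.sum_insert, Finset.sum_insert, Finset.sum_insert, Finset.sum_singleton]
      all_goals simp [hii, hii.symm, hj', hj'.symm, hk', hk'.symm]
    have hi := h0 i
    rw [← Finset.sum_subset (Finset.subset_univ {j, j'}) (fun b _ hb => hzero _ (by
      simp only [Finset.mem_insert, Finset.mem_singleton, not_or] at hb
      simp [T, hii.symm, hb])), Finset.sum_pair hj'.symm] at hi
    have hi' := h0 i'
    rw [← Finset.sum_subset (Finset.subset_univ {k, k'}) (fun b _ hb => hzero _ (by
      simp only [Finset.mem_insert, Finset.mem_singleton, not_or] at hb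
      simp [T, hii, hb])), Finset.sum_pair hk'.symm] at hi'
    rw [hsumT (fun p => α p.1 p.2)] at h1
    rw [hsumT (fun p => α p.1 p.2 ^ 2)] at h2
    simp only at h1 h2
    have hs := hsum i i' j j' k k' hii.symm hj'.symm hk'.symm
    have hd : α i j - α i j' ≠ 0 := fun h => hj' (hα i (sub_eq_zero.mp h)).symm
    have e1 : c (i, j') = - c (i, j) := by linear_combination hi
    have e2 : c (i', k') = - c (i', k) := by linear_combination hi'
    rw [e1, e2] at h1 h2
    have : c (i, j) * (α i j - α i j') * ((α i j + α i j') - (α i' k + α i' k')) = 0 := by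
      linear_combination h2 - (α i' k + α i' k') * h1
    exact mul_ne_zero (mul_ne_zero hp hd) (sub_ne_zero.2 hs) this

theorem aux_exists {F : Type*} [Field F] [DecidableEq F] {l r : ℕ} (hr : 4 ≤ r) (hl : 1 ≤ l)
    (α : Fin l → Fin (r + 1) → F) :
    ∃ c : Fin l × Fin (r + 1) → F, c ≠ 0 ∧ hammingNorm c ≤ 5 ∧
      (∀ i, ∑ j, c (i, j) = 0) ∧ (∑ p, α p.1 p.2 * c p = 0) ∧
      (∑ p, α p.1 p.2 ^ 2 * c p = 0) ∧ (∑ p, α p.1 p.2 ^ 3 * c p = 0) := by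
  let i0 : Fin l := ⟨0, hl⟩
  let e : Fin 5 → Fin l × Fin (r + 1) := fun k => (i0, Fin.castLE (by omega) k)
  have he : Function.Injective e := by
    intro a b hab
    simpa [e] using hab
  let M : Matrix (Fin 4) (Fin 5) F := fun t k => α (e k).1 (e k).2 ^ (t : ℕ)
  have hker : LinearMap.ker M.mulVecLin ≠ ⊥ :=
    LinearMap.ker_ne_bot_of_finrank_lt (by simp)
  obtain ⟨v, hv, hv0⟩ := (Submodule.ne_bot_iff _).mp hker
  rw [LinearMap.mem_ker, Matrix.mulVecLin_apply] at hv
  have hvt : ∀ t : Fin 4, ∑ k, α (e k).1 (e k).2 ^ (t : ℕ) * v k = 0 := fun t =>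
    congrFun hv t
  let c : Fin l × Fin (r + 1) → F := Function.extend e v 0
  have hce : ∀ k, c (e k) = v k := fun k => he.extend_apply v 0 k
  have hcn : ∀ p, p ∉ Set.range e → c p = 0 := fun p hp => by
    have := Function.extend_apply' (f := e) v 0 p (by simpa using hp)
    simpa [c] using this
  have hS : ∀ g : Fin l × Fin (r + 1) → F, ∑ p, g p * c p = ∑ k, g (e k) * v k := by
    intro g
    symm
    apply Fintype.sum_of_injective e he
    · intro p hp
      rw [hcn p hp, mul_zero]
    · intro k
      rw [hce]
  refine ⟨c, ?_, ?_, ?_, ?_, ?_, ?_⟩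
  · intro h
    apply hv0
    ext k
    rw [← hce, h]
    rfl
  · have : (Finset.univ.filter fun p => c p ≠ 0) ⊆ Finset.univ.image e := by
      intro p hp
      by_contra hne
      simp only [Finset.mem_filter, Finset.mem_univ, true_and] at hp
      exact hp (hcn p (by simpa using hne))
    calc hammingNorm c ≤ (Finset.univ.image e).card := Finset.card_le_card this
      _ ≤ 5 := by simpa using Finset.card_image_le (s := Finset.univ) (f := e)
  · intro i
    by_cases hi : i = i0
    · subst hi
      have h := hS 1
      have h4 := hvt 0
      simp only [Pi.one_apply, one_mul, Fin.val_zero, pow_zero] at h h4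
      rw [h4, Fintype.sum_prod_type, Finset.sum_eq_single i0] at h
      · exact h
      · intro b _ hb
        apply Finset.sum_eq_zero
        intro j _
        apply hcn
        rintro ⟨k, hk⟩
        exact hb (congrArg Prod.fst hk).symm
      · simp
    · apply Finset.sum_eq_zero
      intro j _
      apply hcn
      rintro ⟨k, hk⟩
      exact hi (congrArg Prod.fst hk).symm
  · rw [hS (fun p => α p.1 p.2)]
    simpa using hvt 1
  · rw [hS (fun p => α p.1 p.2 ^ 2)]
    exact hvt 2
  · rw [hS (fun p => α p.1 p.2 ^ 3)]
    exact hvt 3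

theorem aux_rank {F : Type*} [Field F] {l r : ℕ} (hr : 4 ≤ r) (hl : 1 ≤ l)
    (α : Fin l → Fin (r + 1) → F) (hα : ∀ i : Fin l, Function.Injective (α i))
    (H : Matrix (Fin l ⊕ Fin 3) (Fin l × Fin (r + 1)) F)
    (hH1 : ∀ (i' : Fin l) (p : Fin l × Fin (r + 1)),
      H (Sum.inl i') p = if p.1 = i' then 1 else 0)
    (hH2 : ∀ p : Fin l × Fin (r + 1), H (Sum.inr 0) p = α p.1 p.2)
    (hH3 : ∀ p : Fin l × Fin (r + 1), H (Sum.inr 1) p = α p.1 p.2 ^ 2)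
    (hH4 : ∀ p : Fin l × Fin (r + 1), H (Sum.inr 2) p = α p.1 p.2 ^ 3) :
    H.rank = l + 3 := by
  have hli : LinearIndependent F H.row := by
    rw [Fintype.linearIndependent_iff]
    intro g hg
    have hp : ∀ i j, g (Sum.inl i) + g (Sum.inr 0) * α i j + g (Sum.inr 1) * α i j ^ 2
        + g (Sum.inr 2) * α i j ^ 3 = 0 := by
      intro i j
      have := congrFun hg (i, j)
      simp only [Finset.sum_apply, Pi.smul_apply, Matrix.row_apply, smul_eq_mul,
        Fintype.sum_sum_type, Fin.sum_univ_three, hH1, hH2, hH3, hH4, Pi.zero_apply,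
        mul_ite, mul_one, mul_zero, Finset.sum_ite_eq, Finset.mem_univ, if_true] at this
      linear_combination this
    have hz : ∀ i, g (Sum.inl i) = 0 ∧ g (Sum.inr 0) = 0 ∧ g (Sum.inr 1) = 0 ∧
        g (Sum.inr 2) = 0 := by
      intro i
      let f : Polynomial F := Polynomial.C (g (Sum.inr 2)) * Polynomial.X ^ 3 +
        Polynomial.C (g (Sum.inr 1)) * Polynomial.X ^ 2 +
        Polynomial.C (g (Sum.inr 0)) * Polynomial.X + Polynomial.C (g (Sum.inl i))
      have hf : f = 0 := by
        apply Polynomial.eq_zero_of_natDegree_lt_card_of_eval_eq_zero f (hα i)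
        · intro j
          simp only [f, Polynomial.eval_add, Polynomial.eval_mul, Polynomial.eval_C,
            Polynomial.eval_pow, Polynomial.eval_X]
          linear_combination hp i j
        · have : f.natDegree ≤ 3 := Polynomial.natDegree_cubic_le
          simp only [Fintype.card_fin]
          omega
      have hc : ∀ k, f.coeff k = 0 := by simp [hf]
      have c0 := hc 0
      have c1 := hc 1
      have c2 := hc 2
      have c3 := hc 3
      simp [f, Polynomial.coeff_X, Polynomial.coeff_C, Polynomial.coeff_X_pow] at c0 c1 c2 c3
      exact ⟨c0, c1, c2, c3⟩
    rintro (i | k)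
    · exact (hz i).1
    · have := hz ⟨0, hl⟩
      fin_cases k
      · exact this.2.1
      · exact this.2.2.1
      · exact this.2.2.2
  simpa using hli.rank_matrix

/-- Construction 3: with `r ≥ 4`, `n = l(r+1)`, distinct `α i ·` within each group, distinct
pairwise sums across groups, and the parity-check matrix with locality rows and Vandermonde
rows `α, α², α³`, the code `{x : Hx = 0}` has dimension `n - l - 3`, all symbol locality `r`,
and minimum distance `5`, which equals the Singleton-like bound `n - k - ⌈k/r⌉ + 2` for
`k = n - l - 3`. -/
theorem stmt_16 {F : Type*} [Field F] [Fintype F] [DecidableEq F]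
    {l r n : ℕ} (hr : 4 ≤ r) (hl : 1 ≤ l) (hn : n = l * (r + 1))
    (α : Fin l → Fin (r + 1) → F) (hα : ∀ i : Fin l, Function.Injective (α i))
    (hsum : ∀ (i₁ i₂ : Fin l) (j₁ j₂ h₁ h₂ : Fin (r + 1)), i₁ ≠ i₂ → j₁ ≠ j₂ → h₁ ≠ h₂ →
      α i₁ j₁ + α i₁ j₂ ≠ α i₂ h₁ + α i₂ h₂)
    (H : Matrix (Fin l ⊕ Fin 3) (Fin l × Fin (r + 1)) F)
    (hH1 : ∀ (i' : Fin l) (p : Fin l × Fin (r + 1)),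
      H (Sum.inl i') p = if p.1 = i' then 1 else 0)
    (hH2 : ∀ p : Fin l × Fin (r + 1), H (Sum.inr 0) p = α p.1 p.2)
    (hH3 : ∀ p : Fin l × Fin (r + 1), H (Sum.inr 1) p = α p.1 p.2 ^ 2)
    (hH4 : ∀ p : Fin l × Fin (r + 1), H (Sum.inr 2) p = α p.1 p.2 ^ 3) :
    Module.finrank F (LinearMap.ker H.mulVecLin) = n - l - 3 ∧
    (∀ p : Fin l × Fin (r + 1), HasLocality (LinearMap.ker H.mulVecLin) p r) ∧
    minDist (LinearMap.ker H.mulVecLin) = 5 ∧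
    (5 : ℤ) = (n : ℤ) - (n - l - 3 : ℕ) - ⌈((n - l - 3 : ℕ) : ℚ) / r⌉ + 2 := by
  have hk := aux_ker α H hH1 hH2 hH3 hH4
  have hlr : n = l * r + l := by rw [hn]; ring
  have h4 : 4 ≤ l * r := by nlinarith
  refine ⟨?_, ?_, ?_, ?_⟩
  · have h1 := aux_rank hr hl α hα H hH1 hH2 hH3 hH4
    have h2 := LinearMap.finrank_range_add_finrank_ker H.mulVecLin
    have h3 : Module.finrank F (LinearMap.range H.mulVecLin) = l + 3 := h1
    simp only [h3, Module.finrank_fintype_fun_eq_card, Fintype.card_prod, Fintype.card_fin,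
      ← hn] at h2
    omega
  · rintro ⟨i, j⟩
    refine ⟨(Finset.univ.erase j).image (fun b => (i, b)), by simp, ?_, ?_⟩
    · refine Finset.card_image_le.trans ?_
      simp
    · intro c hc c' hc' hR
      have e1 := ((hk c).1 hc).1 i
      have e2 := ((hk c').1 hc').1 i
      rw [← Finset.add_sum_erase _ _ (Finset.mem_univ j)] at e1 e2
      have e3 : ∑ b ∈ Finset.univ.erase j, c (i, b) = ∑ b ∈ Finset.univ.erase j, c' (i, b) :=
        Finset.sum_congr rfl fun b hb => hR _ (Finset.mem_image_of_mem _ hb)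
      linear_combination e1 - e2 - e3
  · have hlow : ∀ c ∈ LinearMap.ker H.mulVecLin, c ≠ 0 → 5 ≤ hammingNorm c := by
      intro c hc hc0
      obtain ⟨a0, a1, a2, a3⟩ := (hk c).1 hc
      exact aux_lower α hα hsum c a0 a1 a2 a3 hc0
    obtain ⟨c, hc0, hc5, hc⟩ := aux_exists hr hl α
    have hcm := (hk c).2 hc
    have h5 : hammingNorm c = 5 := le_antisymm hc5 (hlow c hcm hc0)
    unfold minDist
    apply le_antisymm
    · exact Nat.sInf_le ⟨c, hcm, hc0, h5⟩
    · refine le_csInf (Set.nonempty_of_mem (x := 5) ⟨c, hcm, hc0, h5⟩) ?_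
      rintro w ⟨d, hd, hd0, rfl⟩
      exact hlow d hd hd0
  · have hnat : n - l - 3 = l * r - 3 := by omega
    have hq : ((n - l - 3 : ℕ) : ℚ) = (l : ℚ) * r - 3 := by
      rw [hnat, Nat.cast_sub (by omega)]
      push_cast
      ring
    have hr' : (4 : ℚ) ≤ r := by exact_mod_cast hr
    have hceil : ⌈((n - l - 3 : ℕ) : ℚ) / r⌉ = (l : ℤ) := by
      rw [Int.ceil_eq_iff, hq, lt_div_iff₀ (by linarith), div_le_iff₀ (by linarith)]
      push_cast
      constructor <;> nlinarith
    rw [hceil]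
    omega
end
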